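/- The group PGL(3, ℤ/4ℤ) acts transitively on the set of hyperovals of PHG(2, ℤ/4ℤ). -/

import Mathlib

/-- A point of a projective Hjelmslev geometry PHG(n-1, R): a free rank-1 submodule
of Rⁿ, i.e. the R-span of a vector having at least one unit coordinate. -/
def IsPoint {R : Type} [CommRing R] {n : ℕ} (P : Submodule R (Fin n → R)) : Prop :=
  ∃ v : Fin n → R, (∃ i, IsUnit (v i)) ∧ P = Submodule.span R {v}

/-- A free rank-k submodule of Rⁿ: a submodule linearly isomorphic to Rᵏ. -/
def IsFreeRank {R : Type} [CommRing R] {n : ℕ} (k : ℕ) (L : Submodule R (Fin n → R)) : Prop :=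
  Nonempty ((Fin k → R) ≃ₗ[R] L)

/-- A line of PHG(2, R): a free rank-2 submodule of R³. -/
abbrev IsLine {R : Type} [CommRing R] (L : Submodule R (Fin 3 → R)) : Prop := IsFreeRank 2 L

/-- A hyperoval of PHG(2, R), |R| = 4: a set of 7 points with at most 2 points on each line. -/
def IsHyperoval {R : Type} [CommRing R] (H : Set (Submodule R (Fin 3 → R))) : Prop :=
  (∀ P ∈ H, IsPoint P) ∧ H.ncard = 7 ∧ ∀ L, IsLine L → {P ∈ H | P ≤ L}.ncard ≤ 2

abbrev R4 := ZMod 4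

abbrev GL3 := GL (Fin 3) R4

/-- The subgroup {I, -I} of scalar matrices of GL(3, ℤ/4ℤ)
(the units of ℤ/4ℤ are ±1). -/
def pmOne : Subgroup GL3 where
  carrier := {1, -1}
  one_mem' := Or.inl rfl
  mul_mem' := by rintro a b (rfl | rfl) (rfl | rfl) <;> simp
  inv_mem' := by rintro a (rfl | rfl) <;> simp

instance : pmOne.Normal := by
  constructor
  rintro n (rfl | rfl) g
  · simpa using pmOne.one_mem
  · right
    simp [mul_neg, neg_mul, Set.mem_singleton_iff]

/-- PGL(3, ℤ/4ℤ): GL(3, ℤ/4ℤ) modulo its subgroup of scalar matrices {I, -I}. -/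
abbrev PGL3 := GL3 ⧸ pmOne

/-- A matrix maps a point (the span of a vector) to the span of the image vector;
equivalently, it maps a submodule to its image. -/
def mapPt (g : GL3) (P : Submodule R4 (Fin 3 → R4)) : Submodule R4 (Fin 3 → R4) :=
  P.map (Matrix.mulVecLin (g : Matrix (Fin 3) (Fin 3) R4))

lemma mapPt_neg (h : GL3) (P : Submodule R4 (Fin 3 → R4)) : mapPt (-h) P = mapPt h P := by
  unfold mapPt
  have : Matrix.mulVecLin ((-h : GL3) : Matrix (Fin 3) (Fin 3) R4)
      = -Matrix.mulVecLin ((h : GL3) : Matrix (Fin 3) (Fin 3) R4) := by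
    ext v i
    simp [Matrix.neg_mulVec]
  rw [this, Submodule.map_neg]

/-- The induced action of PGL(3, ℤ/4ℤ) on points of PHG(2, ℤ/4ℤ). -/
def pglMapPt (g : PGL3) (P : Submodule R4 (Fin 3 → R4)) : Submodule R4 (Fin 3 → R4) :=
  Quotient.liftOn' g (fun h => mapPt h P) (by
    intro a b hab
    rw [QuotientGroup.leftRel_apply] at hab
    rcases hab with h1 | h1
    · have hb : b = a := by
        have h2 := mul_inv_cancel_left a b
        rw [h1, mul_one] at h2
        exact h2.symm
      rw [hb]
    · rw [Set.mem_singleton_iff] at h1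
      have hb : b = -a := by
        have h2 := mul_inv_cancel_left a b
        rw [h1, mul_neg, mul_one] at h2
        exact h2.symm
      rw [hb]
      exact (mapPt_neg a P).symm)

/-- The induced action of PGL(3, ℤ/4ℤ) on sets of points. -/
def pglMapSet (g : PGL3) (H : Set (Submodule R4 (Fin 3 → R4))) : Set (Submodule R4 (Fin 3 → R4)) :=
  pglMapPt g '' H

/-!
Two distinct points of a hyperoval never reduce to the same point of the Fano plane: if `P` had a
neighbour in the hyperoval, two lines would join them, and the five other points would have to lie
on the four remaining lines through `P`, at most one on each. So a hyperoval maps bijectively onto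
the Fano plane, and in particular contains a projective frame, given by a basis `b` and the sum of
its vectors. The lines joining pairs of frame points leave only one possible lift for each of the
other three points, so the basis determines the hyperoval by a formula that commutes with linear
maps. A matrix carrying one such basis to another then carries one hyperoval to the other.
-/

open Module Submodule

section BasisPairs

variable {R M : Type*} [CommRing R] [AddCommGroup M] [Module R M]

theorem linearIndependent_basis_pair_add_smul {ι : Type*} (b : Basis ι R M)
    {i j k : ι} (hij : i ≠ j) (hik : i ≠ k) (hjk : j ≠ k) (c : R) :
    LinearIndependent R ![b i, b j + c • b k] := by
  refine LinearIndependent.pair_iff.2 fun s t h => ⟨?_, ?_⟩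
  · simpa [hij, hik] using congrArg (b.coord i) h
  · simpa [hij, hjk] using congrArg (b.coord j) h

theorem mem_span_basis_pair_iff (b : Basis (Fin 3) R M) {i j k : Fin 3} (hij : i ≠ j) (hik : i ≠ k)
    (hjk : j ≠ k) {c : R} {v : M} :
    v ∈ span R {b i, b j + c • b k} ↔ b.repr v k = c * b.repr v j := by
  rw [mem_span_pair]
  constructor
  · rintro ⟨s, t, rfl⟩
    simp [hij.symm, hik.symm, hjk, hjk.symm, mul_comm]
  · refine fun h => ⟨b.repr v i, b.repr v j, b.ext_elem fun m => ?_⟩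
    have hm : m = i ∨ m = j ∨ m = k := by lia
    rcases hm with rfl | rfl | rfl <;>
      simp [hij, hij.symm, hik, hik.symm, hjk, hjk.symm, h, mul_comm]

end BasisPairs

section Arcs

variable {R : Type} [CommRing R]

theorem isFreeRank_span_range {n k : ℕ} {v : Fin k → Fin n → R} (hv : LinearIndependent R v) :
    IsFreeRank k (span R (Set.range v)) :=
  ⟨(Basis.span hv).equivFun.symm⟩

theorem isFreeRank_two_span_basis_pair {n : ℕ} {ι : Type*} (b : Basis ι R (Fin n → R))
    {i j k : ι} (hij : i ≠ j) (hik : i ≠ k) (hjk : j ≠ k) (c : R) :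
    IsFreeRank 2 (span R {b i, b j + c • b k}) := by
  simpa [Set.pair_comm] using
    isFreeRank_span_range (linearIndependent_basis_pair_add_smul b hij hik hjk c)

namespace IsHyperoval

variable {H : Set (Submodule R (Fin 3 → R))}

theorem finite (hH : IsHyperoval H) : H.Finite :=
  Set.finite_of_ncard_ne_zero (by rw [hH.2.1]; decide)

theorem not_le_of_isLine (hH : IsHyperoval H) {L P Q S : Submodule R (Fin 3 → R)} (hL : IsLine L)
    (hP : P ∈ H) (hQ : Q ∈ H) (hS : S ∈ H) (hPQ : P ≠ Q) (hPS : P ≠ S) (hQS : Q ≠ S)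
    (hPL : P ≤ L) (hQL : Q ≤ L) : ¬ S ≤ L := fun hSL =>
  (hH.2.2 L hL).not_gt <| (Set.two_lt_ncard_iff (hH.finite.subset fun _ h => h.1)).2
    ⟨P, Q, S, ⟨hP, hPL⟩, ⟨hQ, hQL⟩, ⟨hS, hSL⟩, hPQ, hPS, hQS⟩

theorem repr_ne_mul_repr (hH : IsHyperoval H) (b : Basis (Fin 3) R (Fin 3 → R)) {i j k : Fin 3}
    (hij : i ≠ j) (hik : i ≠ k) (hjk : j ≠ k) {u v w : Fin 3 → R} (hu : span R {u} ∈ H)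
    (hv : span R {v} ∈ H) (hw : span R {w} ∈ H) (huv : span R {u} ≠ span R {v})
    (huw : span R {u} ≠ span R {w}) (hvw : span R {v} ≠ span R {w}) {c : R}
    (hcu : b.repr u k = c * b.repr u j) (hcv : b.repr v k = c * b.repr v j) :
    b.repr w k ≠ c * b.repr w j := by
  have hmem {x : Fin 3 → R} := mem_span_basis_pair_iff b hij hik hjk (c := c) (v := x)
  simp only [ne_eq, ← hmem, ← span_singleton_le_iff_mem] at hcu hcv ⊢
  exact hH.not_le_of_isLine (isFreeRank_two_span_basis_pair b hij hik hjk c)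
    hu hv hw huv huw hvw hcu hcv

end IsHyperoval

end Arcs

section Reduction

theorem exists_basis_of_linearIndependent_comp {R K ι : Type*} [CommRing R] [Field K] [Finite ι]
    (φ : R →+* K) [IsLocalHom φ] {v : ι → ι → R}
    (hv : LinearIndependent K fun i => φ ∘ v i) : ∃ b : Basis ι R (ι → R), ⇑b = v := by
  classical
  have := Fintype.ofFinite ι
  have hdet : IsUnit (Matrix.of v).det := by
    refine isUnit_of_map_unit φ _ ?_
    rw [φ.map_det, ← Matrix.isUnit_iff_isUnit_det]
    exact Matrix.linearIndependent_rows_iff_isUnit.1 hv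
  rw [← Pi.basisFun_det_apply, ← Basis.is_basis_iff_det] at hdet
  exact ⟨Basis.mk hdet.1 hdet.2.ge, Basis.coe_mk _ _⟩

/-- The residue map `ℤ/4ℤ → ℤ/2ℤ`. -/
def mod2 : R4 →+* ZMod 2 := ZMod.castHom (by decide) (ZMod 2)

theorem mod2_surjective : Function.Surjective mod2 := by decide

theorem isUnit_of_mod2_eq_one {a : R4} (ha : mod2 a = 1) : IsUnit a := by
  have h : ∀ a : R4, mod2 a = 1 → a * a = 1 := by decide
  exact .of_mul_eq_one a (h a ha)

instance : IsLocalHom mod2 where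
  map_nonunit _ ha := isUnit_of_mod2_eq_one (Fin.eq_one_of_ne_zero _ ha.ne_zero)

variable {ι : Type*} {u v : ι → R4}

/-- Coordinatewise reduction modulo 2. On the vectors spanning points, it is the map onto the Fano
plane that identifies neighbouring points. -/
def red : (ι → R4) →+* (ι → ZMod 2) := mod2.compLeft ι

theorem red_surjective : Function.Surjective (red (ι := ι)) := mod2_surjective.comp_left

theorem red_smul (c : R4) (v : ι → R4) : red (c • v) = mod2 c • red v := by
  ext i
  exact map_mul mod2 c (v i)

theorem two_smul_eq_zero_iff : (2 : R4) • v = 0 ↔ red v = 0 := by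
  have h : ∀ a : R4, 2 * a = 0 ↔ mod2 a = 0 := by decide
  simp only [funext_iff]
  exact forall_congr' fun i => h (v i)

theorem exists_eq_add_two_smul (h : red u = red v) : ∃ w, v = u + (2 : R4) • w := by
  have halve : ∀ a b : R4, mod2 a = mod2 b → ∃ c, b = a + 2 * c := by decide
  choose w hw using fun i => halve (u i) (v i) (congrFun h i)
  exact ⟨w, funext hw⟩

theorem red_eq_of_span_eq (h : span R4 {u} = span R4 {v}) : red u = red v := by
  obtain ⟨c, hc⟩ := mem_span_singleton.1 (h ▸ mem_span_singleton_self u)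
  obtain ⟨d, hd⟩ := mem_span_singleton.1 (h ▸ mem_span_singleton_self v)
  have hcr : mod2 c • red v = red u := by rw [← red_smul, hc]
  have hdr : mod2 d • red u = red v := by rw [← red_smul, hd]
  rcases eq_or_ne (mod2 c) 0 with h0 | h0
  · have hu : red u = 0 := by rw [← hcr, h0, zero_smul]
    rw [← hdr, hu, smul_zero]
  · have h1 : mod2 c = 1 := Fin.eq_one_of_ne_zero _ h0
    rw [← hcr, h1, one_smul]

theorem mod2_repr [Finite ι] [DecidableEq ι] (b : Basis ι R4 (ι → R4))
    (hb : ∀ i, red (b i) = Pi.single i 1) (v : ι → R4) (i : ι) :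
    mod2 (b.repr v i) = red v i := by
  have := Fintype.ofFinite ι
  conv_rhs => rw [← b.sum_repr v, map_sum]
  simp [red_smul, hb, Pi.single_apply]

theorem IsPoint.red_ne_zero {n : ℕ} {u : Fin n → R4} (hu : IsPoint (span R4 {u})) : red u ≠ 0 := by
  obtain ⟨v, ⟨i, hi⟩, huv⟩ := hu
  rw [red_eq_of_span_eq huv]
  exact fun h => (hi.map mod2).ne_zero (congrFun h i)

end Reduction

section Frames

/-- Generators of the seven points that a hyperoval of PHG(2, ℤ/4ℤ) containing the projective frame
`b 0`, `b 1`, `b 2`, `∑ i, b i` must have. The indices `i + 1` and `i + 2` are taken modulo 3. -/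
def frameVectors {M : Type*} [AddCommGroup M] (b : Fin 3 → M) : Set M :=
  Set.range b ∪ {∑ i, b i} ∪ Set.range fun i => 2 • b i + b (i + 1) - b (i + 2)

theorem image_frameVectors {M N F : Type*} [AddCommGroup M] [AddCommGroup N] [FunLike F M N]
    [AddMonoidHomClass F M N] (f : F) (b : Fin 3 → M) :
    f '' frameVectors b = frameVectors (f ∘ b) := by
  simp only [frameVectors, Set.image_union, Set.image_singleton, ← Set.range_comp,
    Function.comp_def, map_add, map_sub, map_nsmul, map_sum]

theorem frameVectors_single :
    frameVectors (fun i : Fin 3 => (Pi.single i 1 : Fin 3 → ZMod 2)) = {0}ᶜ := by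
  have h : ∀ x : Fin 3 → ZMod 2, ((∃ i, Pi.single i 1 = x) ∨ x = ∑ i, Pi.single i 1) ∨
      (∃ i : Fin 3, 2 • Pi.single i 1 + Pi.single (i + 1) 1 - Pi.single (i + 2) 1 = x) ↔ x ≠ 0 := by
    decide
  exact Set.ext h

/-- The vectors `b 0`, `b 1`, `b 2`, `∑ i, b i` span a projective frame contained in `H`, and they
are scaled so as to reduce to the standard frame of the Fano plane. -/
structure IsNormalizedFrame (b : Fin 3 → Fin 3 → R4) (H : Set (Submodule R4 (Fin 3 → R4))) :
    Prop where
  red_apply (i : Fin 3) : red (b i) = Pi.single i 1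
  span_mem (i : Fin 3) : span R4 {b i} ∈ H
  span_sum_mem : span R4 {∑ i, b i} ∈ H

theorem IsNormalizedFrame.red_sum {b : Fin 3 → Fin 3 → R4} {H : Set (Submodule R4 (Fin 3 → R4))}
    (hb : IsNormalizedFrame b H) : red (∑ i, b i) = 1 := by
  simp only [map_sum, hb.red_apply]
  exact Finset.univ_sum_single 1

end Frames

namespace IsHyperoval

variable {H : Set (Submodule R4 (Fin 3 → R4))}

theorem exists_eq_span (hH : IsHyperoval H) {P : Submodule R4 (Fin 3 → R4)} (hP : P ∈ H) :
    ∃ v, P = span R4 {v} :=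
  (hH.1 P hP).imp fun _ h => h.2

theorem span_add_two_smul_notMem (hH : IsHyperoval H) (b : Basis (Fin 3) R4 (Fin 3 → R4))
    (hP : span R4 {b 0} ∈ H) : span R4 {b 0 + (2 : R4) • b 1} ∉ H := by
  intro hQ
  have hPQ : span R4 {b 0} ≠ span R4 {b 0 + (2 : R4) • b 1} := by
    intro h
    obtain ⟨c, hc⟩ := mem_span_singleton.1 (h ▸ mem_span_singleton_self (b 0 + (2 : R4) • b 1))
    have h02 : (0 : R4) = 2 := by simpa using congrArg (b.coord 1) hc
    exact absurd h02 (by decide)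
  have hcover : ∀ S ∈ H \ {span R4 {b 0}, span R4 {b 0 + (2 : R4) • b 1}},
      ∃ v t, S = span R4 {v} ∧ b.repr v 1 = t * b.repr v 2 := by
    rintro S ⟨hS, hSPQ⟩
    obtain ⟨hSP, hSQ⟩ := not_or.1 hSPQ
    obtain ⟨v, rfl⟩ := hH.exists_eq_span hS
    have hoff (c : R4) (hc : c * 2 = 0) : b.repr v 2 ≠ c * b.repr v 1 :=
      hH.repr_ne_mul_repr b (i := 0) (by decide) (by decide) (by decide) hP hQ hS hPQ
        (Ne.symm hSP) (Ne.symm hSQ) (by simp) (by simp [hc])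
    have hlines : ∀ y z : R4, z ≠ 0 * y → z ≠ 2 * y → ∃ t, y = t * z := by decide
    obtain ⟨t, ht⟩ := hlines _ _ (hoff 0 (by decide)) (hoff 2 (by decide))
    exact ⟨v, t, rfl, ht⟩
  choose! v t hv ht using hcover
  have hcard : (Set.univ : Set R4).ncard <
      (H \ {span R4 {b 0}, span R4 {b 0 + (2 : R4) • b 1}}).ncard := by
    rw [Set.ncard_sdiff (Set.pair_subset hP hQ), hH.2.1, Set.ncard_pair hPQ]
    simp
  obtain ⟨S, hS, T, hT, hST, htST⟩ :=
    Set.exists_ne_map_eq_of_ncard_lt_of_maps_to (f := t) hcard fun _ _ => Set.mem_univ _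
  obtain ⟨hSP, -⟩ := not_or.1 hS.2
  obtain ⟨hTP, -⟩ := not_or.1 hT.2
  rw [hv S hS] at hSP hST
  rw [hv T hT] at hTP hST
  exact hH.repr_ne_mul_repr b (i := 0) (by decide) (by decide) (by decide) hP (hv S hS ▸ hS.1)
    (hv T hT ▸ hT.1) (Ne.symm hSP) (Ne.symm hTP) hST (by simp) (ht S hS) (htST ▸ ht T hT)

theorem span_eq_of_red_eq (hH : IsHyperoval H) {u v : Fin 3 → R4} (hu : span R4 {u} ∈ H)
    (hv : span R4 {v} ∈ H) (huv : red u = red v) : span R4 {u} = span R4 {v} := by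
  obtain ⟨w, rfl⟩ := exists_eq_add_two_smul huv
  by_cases hw : red w = 0
  · rw [two_smul_eq_zero_iff.2 hw, add_zero]
  by_cases hwu : red w = red u
  · have h2 : (2 : R4) • (w - u) = 0 := by
      rw [two_smul_eq_zero_iff, map_sub, hwu, sub_self]
    have hneg : u + (2 : R4) • w = (3 : R4) • u := by
      calc u + (2 : R4) • w = (3 : R4) • u + (2 : R4) • (w - u) := by module
        _ = (3 : R4) • u := by rw [h2, add_zero]
    rw [hneg, span_singleton_smul_eq (isUnit_of_mod2_eq_one (by decide))]
  · have hpair : LinearIndependent (ZMod 2) ![red u, red w] := by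
      have h : ∀ x y : Fin 3 → ZMod 2, x ≠ 0 → y ≠ 0 → y ≠ x → ∀ s t : ZMod 2,
        s • x + t • y = 0 → s = 0 ∧ t = 0 := by decide
      exact LinearIndependent.pair_iff.2 (h _ _ (hH.1 _ hu).red_ne_zero hw hwu)
    obtain ⟨x, hx⟩ := exists_linearIndependent_snoc_of_lt_finrank hpair (by simp)
    obtain ⟨r, rfl⟩ := red_surjective x
    have hred : (fun i => mod2 ∘ ![u, w, r] i) = Fin.snoc ![red u, red w] (red r) := by
      ext1 i
      fin_cases i <;> rfl
    obtain ⟨b, hb⟩ := exists_basis_of_linearIndependent_comp mod2 (hred ▸ hx)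
    have hb0 : b 0 = u := congrFun hb 0
    have hb1 : b 1 = w := congrFun hb 1
    subst hb0 hb1
    exact absurd hv (hH.span_add_two_smul_notMem b hu)

theorem exists_red_eq (hH : IsHyperoval H) {x : Fin 3 → ZMod 2} (hx : x ≠ 0) :
    ∃ v, span R4 {v} ∈ H ∧ red v = x := by
  choose! v hv using fun P => hH.exists_eq_span (P := P)
  have hinj : Set.InjOn (fun P => red (v P)) H := by
    intro P hP Q hQ hPQ
    rw [hv P hP, hv Q hQ]
    exact hH.span_eq_of_red_eq (hv P hP ▸ hP) (hv Q hQ ▸ hQ) hPQ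
  have hsub : (fun P => red (v P)) '' H ⊆ {0}ᶜ := by
    rintro _ ⟨P, hP, rfl⟩
    exact (hv P hP ▸ hH.1 P hP).red_ne_zero
  have hcard : ({0}ᶜ : Set (Fin 3 → ZMod 2)).ncard ≤ ((fun P => red (v P)) '' H).ncard := by
    rw [hinj.ncard_image, hH.2.1, Set.ncard_compl, Set.ncard_singleton]
    simp
  obtain ⟨P, hP, hPx⟩ : x ∈ (fun P => red (v P)) '' H := by
    rwa [Set.eq_of_subset_of_ncard_le hsub hcard]
  exact ⟨v P, hv P hP ▸ hP, hPx⟩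

theorem exists_isNormalizedFrame (hH : IsHyperoval H) :
    ∃ b : Basis (Fin 3) R4 (Fin 3 → R4), IsNormalizedFrame b H := by
  choose e heH he using fun i : Fin 3 => hH.exists_red_eq (Pi.single_ne_zero_iff.2 one_ne_zero :
    (Pi.single i 1 : Fin 3 → ZMod 2) ≠ 0)
  obtain ⟨s, hsH, hs⟩ := hH.exists_red_eq (one_ne_zero : (1 : Fin 3 → ZMod 2) ≠ 0)
  have hli : LinearIndependent (ZMod 2) fun i => mod2 ∘ e i := by
    convert (Pi.basisFun (ZMod 2) (Fin 3)).linearIndependent with i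
    exact (he i).trans (Pi.basisFun_apply ..).symm
  obtain ⟨b, rfl⟩ := exists_basis_of_linearIndependent_comp mod2 hli
  have hcoord (i : Fin 3) : mod2 (b.repr s i) = 1 := by rw [mod2_repr b he, hs, Pi.one_apply]
  have hunit (i : Fin 3) : IsUnit (b.repr s i) := isUnit_of_mod2_eq_one (hcoord i)
  refine ⟨b.isUnitSMul hunit, fun i => ?_, fun i => ?_, ?_⟩
  · rw [Basis.isUnitSMul_apply, red_smul, hcoord, one_smul, he]
  · rw [Basis.isUnitSMul_apply, span_singleton_smul_eq (hunit i)]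
    exact heH i
  · simpa only [Basis.isUnitSMul_apply, b.sum_repr] using hsH

theorem repr_eq_of_red_eq_one_sub_single (hH : IsHyperoval H) {b : Basis (Fin 3) R4 (Fin 3 → R4)}
    (hb : IsNormalizedFrame b H) {i j k : Fin 3} (hij : i ≠ j) (hik : i ≠ k) (hjk : j ≠ k)
    {v : Fin 3 → R4} (hv : span R4 {v} ∈ H) (hred : red v = 1 - Pi.single i 1) :
    b.repr v i = b.repr v j * 2 ∧ b.repr v k = -b.repr v j := by
  have hb1 (l : Fin 3) : span R4 {b l} ≠ span R4 {∑ m, b m} := by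
    have h : ∀ l : Fin 3, (Pi.single l 1 : Fin 3 → ZMod 2) ≠ 1 := by decide
    exact mt red_eq_of_span_eq (by rw [hb.red_apply, hb.red_sum]; exact h l)
  have hbb : span R4 {b j} ≠ span R4 {b k} := by
    have h : ∀ j k : Fin 3, j ≠ k → (Pi.single j 1 : Fin 3 → ZMod 2) ≠ Pi.single k 1 := by decide
    exact mt red_eq_of_span_eq (by rw [hb.red_apply, hb.red_apply]; exact h j k hjk)
  have hbv (l : Fin 3) : span R4 {b l} ≠ span R4 {v} := by
    have h : ∀ l i : Fin 3, (Pi.single l 1 : Fin 3 → ZMod 2) ≠ 1 - Pi.single i 1 := by decide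
    exact mt red_eq_of_span_eq (by rw [hb.red_apply, hred]; exact h l i)
  have h1v : span R4 {∑ m, b m} ≠ span R4 {v} := by
    have h : ∀ i : Fin 3, (1 : Fin 3 → ZMod 2) ≠ 1 - Pi.single i 1 := by decide
    exact mt red_eq_of_span_eq (by rw [hb.red_sum, hred]; exact h i)
  have hi : b.repr v i ≠ 0 * b.repr v k :=
    hH.repr_ne_mul_repr b hjk hij.symm hik.symm (hb.span_mem j) (hb.span_mem k) hv hbb (hbv j)
      (hbv k) (by simp [hij.symm]) (by simp [hik.symm])
  have hk : b.repr v k ≠ 1 * b.repr v j :=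
    hH.repr_ne_mul_repr b hij hik hjk (hb.span_mem i) hb.span_sum_mem hv (hb1 i) (hbv i) h1v
      (by simp [hij, hik]) (by simp)
  have hmod (l : Fin 3) : mod2 (b.repr v l) = (1 - Pi.single i 1 : Fin 3 → ZMod 2) l := by
    rw [mod2_repr b hb.red_apply, hred]
  have hcoord : ∀ x y z : R4, mod2 x = 0 → mod2 y = 1 → mod2 z = 1 → x ≠ 0 * z → z ≠ 1 * y →
      x = y * 2 ∧ z = -y := by decide
  exact hcoord _ _ _ (by simp [hmod]) (by simp [hmod, hij.symm]) (by simp [hmod, hik.symm]) hi hk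

theorem span_two_nsmul_add_sub_mem (hH : IsHyperoval H) {b : Basis (Fin 3) R4 (Fin 3 → R4)}
    (hb : IsNormalizedFrame b H) (i : Fin 3) :
    span R4 {2 • b i + b (i + 1) - b (i + 2)} ∈ H := by
  have hne : ∀ i : Fin 3, (1 - Pi.single i 1 : Fin 3 → ZMod 2) ≠ 0 := by decide
  obtain ⟨v, hvH, hred⟩ := hH.exists_red_eq (hne i)
  have hij : i ≠ i + 1 := by lia
  have hik : i ≠ i + 2 := by lia
  have hjk : i + 1 ≠ i + 2 := by lia
  obtain ⟨hvi, hvk⟩ := hH.repr_eq_of_red_eq_one_sub_single hb hij hik hjk hvH hred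
  have hunit : IsUnit (b.repr v (i + 1)) := by
    refine isUnit_of_mod2_eq_one ?_
    simp [mod2_repr b hb.red_apply, hred, hij.symm]
  have hv : v = b.repr v (i + 1) • (2 • b i + b (i + 1) - b (i + 2)) := by
    refine b.ext_elem fun m => ?_
    have hm : m = i ∨ m = i + 1 ∨ m = i + 2 := by lia
    rcases hm with rfl | rfl | rfl
    · simp [-nsmul_eq_mul, hvi, hij, hik]
    · simp [-nsmul_eq_mul, hjk]
    · simp [-nsmul_eq_mul, hvk]
  rwa [hv, span_singleton_smul_eq hunit] at hvH

theorem eq_image_frameVectors (hH : IsHyperoval H) {b : Basis (Fin 3) R4 (Fin 3 → R4)}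
    (hb : IsNormalizedFrame b H) : H = (fun v => span R4 {v}) '' frameVectors b := by
  have hmem : ∀ v ∈ frameVectors b, span R4 {v} ∈ H := by
    rintro _ ((⟨i, rfl⟩ | rfl) | ⟨i, rfl⟩)
    exacts [hb.span_mem i, hb.span_sum_mem, hH.span_two_nsmul_add_sub_mem hb i]
  refine Set.Subset.antisymm (fun P hP => ?_) (Set.image_subset_iff.2 hmem)
  obtain ⟨v, rfl⟩ := hH.exists_eq_span hP
  have hv : red v ∈ red '' frameVectors b := by
    rw [image_frameVectors, show red ∘ b = _ from funext hb.red_apply, frameVectors_single]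
    exact (hH.1 _ hP).red_ne_zero
  obtain ⟨w, hw, hwv⟩ := hv
  exact ⟨w, hw, hH.span_eq_of_red_eq (hmem w hw) hP hwv⟩

theorem exists_basis_eq_image_frameVectors (hH : IsHyperoval H) :
    ∃ b : Basis (Fin 3) R4 (Fin 3 → R4), H = (fun v => span R4 {v}) '' frameVectors b :=
  hH.exists_isNormalizedFrame.imp fun _ hb => hH.eq_image_frameVectors hb

end IsHyperoval

theorem exists_mulVecLin_comp_basis_eq {R ι : Type*} [CommRing R] [Fintype ι] [DecidableEq ι]
    (b₁ b₂ : Basis ι R (ι → R)) :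
    ∃ g : GL ι R, Matrix.mulVecLin (g : Matrix ι ι R) ∘ b₁ = b₂ := by
  refine ⟨Matrix.GeneralLinearGroup.toLin.symm
    (.ofLinearEquiv (b₁.equiv b₂ (.refl ι))), ?_⟩
  ext1 i
  rw [Function.comp_apply, ← Matrix.GeneralLinearGroup.coe_toLin, MulEquiv.apply_symm_apply]
  exact b₁.equiv_apply i b₂ (.refl ι)

/-- PGL(3, ℤ/4ℤ) acts transitively on the set of hyperovals of PHG(2, ℤ/4ℤ). -/
theorem pgl_transitive_on_hyperovals :
    ∀ H₁ H₂ : Set (Submodule R4 (Fin 3 → R4)), IsHyperoval H₁ → IsHyperoval H₂ →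
      ∃ g : PGL3, pglMapSet g H₁ = H₂ := by
  intro H₁ H₂ h₁ h₂
  obtain ⟨b₁, rfl⟩ := h₁.exists_basis_eq_image_frameVectors
  obtain ⟨b₂, rfl⟩ := h₂.exists_basis_eq_image_frameVectors
  obtain ⟨g, hg⟩ := exists_mulVecLin_comp_basis_eq b₁ b₂
  have hmap (v : Fin 3 → R4) : pglMapPt g (span R4 {v}) =
      span R4 {Matrix.mulVecLin (g : Matrix (Fin 3) (Fin 3) R4) v} :=
    (map_span _ _).trans (by rw [Set.image_singleton])
  refine ⟨g, ?_⟩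
  rw [pglMapSet, Set.image_image]
  simp only [hmap]
  rw [← hg, ← image_frameVectors, Set.image_image]
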